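/- Let f be the infinite Fibonacci sequence and let n ≥ 2. Then the first difference of the N-factor complexity of f satisfies: P_f^{(1)}(n,N) = F_N if N = φ(n); P_f^{(1)}(n,N) = F_{φ(n)+1} + (n−1)(N−φ(n)−1)/2 if N ≥ φ(n)+1 and N+φ(n) is odd; and P_f^{(1)}(n,N) = F_{φ(n)} + (n−1)(N−φ(n))/2 if N ≥ φ(n)+1 and N+φ(n) is even. -/

import Mathlib

/-!
Write `W_k = τ^k(0)`, a word of length `F_{k+1}`. Then `W_{k+2} = W_{k+1} (W_k + 2)`, where `+ 2`
is applied letterwise; in terms of the limit, `f(F_{k+2} + i) = f(i) + 2` for `i < F_{k+1}`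
(`fibSeq_add`). All that follows uses only this recursion and `f(0) = 0`, `f(1) = 1`.

* Descending through the recursion, each factor of length `n ≥ 2` is a translate by some `2c` of a
  factor of some `W_{k+1} = W_k (W_{k-1} + 2)` that straddles the cut between the two halves (for
  `k = 0` the word `W_1 = 01` is cut in the middle). If `r` letters lie to the right of the cut, the
  factor is described by the triple `(k, r, c)`, subject to `0 < r < n`, `r ≤ F_k` and
  `n - r ≤ F_{k+1}` (`Valid`, `exists_code`). Conversely all such triples occur
  (`codeWord_factor`).
* The triple is determined by the factor (`word_inj`): two consecutive letters `a b` of `f`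
  determine the level of the cut between them (`pairLevel`), namely `1` if `b` is odd and `a - b + 3`
  otherwise, and the cut at position `F_{k+1}` is the only one of maximal level inside `W_{k+1}`.
* The letter `k` occurs in `W_k` only as the last letter, and is the maximum
  (`fibSeq_last`, `fibSeq_lt`). So the maximum of the factor `(k, r, c)` is `2c + k + 1` if
  `r = F_k` and `2c + k` otherwise (`topLetter`).

Hence the factors with maximum exactly `N` correspond to the admissible pairs `(k, r)` whose
`topLetter` is at most `N` and has the parity of `N` (`codes`). With `F_K < n ≤ F_{K+1}` these are
counted directly for `N = K` and `N = K + 1`, and passing from `N` to `N + 2` adds exactly the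
`n - 1` pairs `(N + 2, r)` with `0 < r < n`.
-/

/-- Number of occurrences of `w` as a contiguous factor of `y`
(number of starting positions `0 ≤ i ≤ |y|-1` where `w` occurs). -/
def occ (w y : List ℕ) : ℕ :=
  ((List.range y.length).filter (fun i => w.isPrefixOf (y.drop i))).length

/-- Base-`k` representation of `m`, most significant digit first, with `(0)_k = 0`. -/
def rep (k m : ℕ) : List ℕ := if m = 0 then [0] else (Nat.digits k m).reverse

/-- The `(k,w)`-digital sequence: number of occurrences of `w` in `(m)_k`. -/
def dseq (k : ℕ) (w : List ℕ) (m : ℕ) : ℕ := occ w (rep k m)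

/-- The set of factors of length `n` of the sequence `a` all of whose letters are `≤ N`. -/
def factorSet (a : ℕ → ℕ) (n N : ℕ) : Set (List ℕ) :=
  { u | (∃ i, u = (List.range n).map fun j => a (i + j)) ∧ ∀ x ∈ u, x ≤ N }

/-- The `N`-factor complexity `P_a(n,N)`. -/
noncomputable def Pc (a : ℕ → ℕ) (n N : ℕ) : ℕ := Nat.card (factorSet a n N)

/-- `F_a^{(1)}(n,N) = F_a(n,N) \ F_a(n,N-1)`. -/
def factorSet1 (a : ℕ → ℕ) (n N : ℕ) : Set (List ℕ) :=
  factorSet a n N \ factorSet a n (N - 1)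

/-- First difference of the `N`-factor complexity in the variable `N`. -/
noncomputable def Pc1 (a : ℕ → ℕ) (n N : ℕ) : ℤ := (Pc a n N : ℤ) - (Pc a n (N - 1) : ℤ)

/-- Second difference of the `N`-factor complexity in the variable `N`. -/
noncomputable def Pc2 (a : ℕ → ℕ) (n N : ℕ) : ℤ := Pc1 a n N - Pc1 a n (N - 1)

/-- The morphism `τ` on single letters: `τ(2i) = (2i)(2i+1)`, `τ(2i+1) = (2i+2)`. -/
def tauLetter (m : ℕ) : List ℕ := if m % 2 = 0 then [m, m + 1] else [m + 1]

/-- The morphism `τ` extended to finite words by concatenation. -/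
def tauWord (u : List ℕ) : List ℕ := u.flatMap tauLetter

/-- Fibonacci numbers with `F_0 = F_1 = 1`. -/
def fibW : ℕ → ℕ
  | 0 => 1
  | 1 => 1
  | n + 2 => fibW (n + 1) + fibW n

/-- `φ(n) = max {k : F_k < n}`. -/
noncomputable def phi (n : ℕ) : ℕ := sSup {k | fibW k < n}

/-- The infinite Fibonacci sequence `f = τ^∞(0)`: since `τ^{p}(0)` is a prefix of
`τ^{p+1}(0)` and `|τ^{n+1}(0)| = F_{n+2} > n`, the `n`-th letter of the fixed point is
the `n`-th letter of `τ^{n+1}(0)`. -/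
def fibSeq (n : ℕ) : ℕ := (tauWord^[n + 1] [0]).getD n 0

/-- The set of factors of length `n` of a finite word `u` all of whose letters are `≤ N`. -/
def factorSetW (u : List ℕ) (n N : ℕ) : Set (List ℕ) :=
  { v | v.length = n ∧ v <:+: u ∧ ∀ x ∈ v, x ≤ N }

/-! ### Fibonacci numbers -/

lemma fibW_add_two (k : ℕ) : fibW (k + 2) = fibW (k + 1) + fibW k := rfl

lemma fibW_add_three (k : ℕ) : fibW (k + 3) = fibW (k + 2) + fibW (k + 1) := rfl

lemma fibW_pos (k : ℕ) : 0 < fibW k := by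
  induction k using Nat.strong_induction_on with
  | _ k ih =>
    match k with
    | 0 => simp [fibW]
    | 1 => simp [fibW]
    | k + 2 => rw [fibW_add_two]; have := ih k (by omega); omega

lemma fibW_mono : Monotone fibW := by
  refine monotone_nat_of_le_succ fun k => ?_
  cases k with
  | zero => simp [fibW]
  | succ k => rw [fibW_add_two]; omega

lemma le_fibW (k : ℕ) : k ≤ fibW k := by
  induction k using Nat.strong_induction_on with
  | _ k ih =>
    match k with
    | 0 => simp [fibW]
    | 1 => simp [fibW]
    | k + 2 =>
      rw [fibW_add_two]
      have := ih (k + 1) (by omega)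
      have := fibW_pos k
      omega

lemma phi_spec (n : ℕ) (hn : 2 ≤ n) : fibW (phi n) < n ∧ n ≤ fibW (phi n + 1) ∧ 1 ≤ phi n := by
  have hb : BddAbove {k | fibW k < n} :=
    ⟨n, fun k hk => by have := le_fibW k; simp only [Set.mem_ofPred_eq] at hk; omega⟩
  have h1 : (1 : ℕ) ∈ {k | fibW k < n} := by simp [fibW]; omega
  refine ⟨Nat.sSup_mem ⟨1, h1⟩ hb, ?_, le_csSup hb h1⟩
  by_contra h
  have : phi n + 1 ≤ phi n := le_csSup hb (show fibW (phi n + 1) < n by omega)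
  omega

/-! ### The recursion of the Fibonacci sequence -/

/-- The words `W_k = τ^k(0)`, given by their recursion `W_{k+2} = W_{k+1} (W_k + 2)`. -/
def fibWord : ℕ → List ℕ
  | 0 => [0]
  | 1 => [0, 1]
  | k + 2 => fibWord (k + 1) ++ (fibWord k).map (· + 2)

lemma tauWord_append (u v : List ℕ) : tauWord (u ++ v) = tauWord u ++ tauWord v := by
  simp [tauWord]

lemma tauWord_map (u : List ℕ) : tauWord (u.map (· + 2)) = (tauWord u).map (· + 2) := by
  induction u with
  | nil => simp [tauWord]
  | cons a u ih =>
    have h : tauLetter (a + 2) = (tauLetter a).map (· + 2) := by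
      simp only [tauLetter, Nat.add_mod_right]
      split_ifs <;> simp
    simp only [tauWord, List.map_cons, List.flatMap_cons, List.map_append, h] at ih ⊢
    rw [ih]

lemma tauWord_fibWord (k : ℕ) : tauWord (fibWord k) = fibWord (k + 1) := by
  induction k using Nat.strong_induction_on with
  | _ k ih =>
    match k with
    | 0 => decide
    | 1 => decide
    | k + 2 =>
      rw [fibWord, tauWord_append, tauWord_map, ih _ (by omega), ih _ (by omega)]
      rfl

lemma tauWord_iterate (k : ℕ) : tauWord^[k] [0] = fibWord k := by
  induction k with
  | zero => rfl
  | succ k ih => rw [Function.iterate_succ_apply', ih, tauWord_fibWord]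

lemma fibWord_length (k : ℕ) : (fibWord k).length = fibW (k + 1) := by
  induction k using Nat.strong_induction_on with
  | _ k ih =>
    match k with
    | 0 => rfl
    | 1 => rfl
    | k + 2 =>
      rw [fibWord, List.length_append, List.length_map, ih _ (by omega), ih _ (by omega)]
      rfl

lemma fibWord_prefix_succ (k : ℕ) : fibWord k <+: fibWord (k + 1) := by
  cases k with
  | zero => exact ⟨[1], rfl⟩
  | succ k => exact List.prefix_append _ _

lemma fibWord_prefix_of_le {k m : ℕ} (h : k ≤ m) : fibWord k <+: fibWord m := by
  induction m, h using Nat.le_induction with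
  | base => exact List.prefix_rfl
  | succ m _ ih => exact ih.trans (fibWord_prefix_succ m)

lemma fibSeq_eq (k i : ℕ) (h : i < fibW (k + 1)) : fibSeq i = (fibWord k).getD i 0 := by
  have key : ∀ a b : ℕ, a ≤ b → i < fibW (a + 1) →
      (fibWord a).getD i 0 = (fibWord b).getD i 0 := by
    intro a b hab hi
    obtain ⟨t, ht⟩ := fibWord_prefix_of_le hab
    rw [← ht, List.getD_append _ _ _ _ (by rw [fibWord_length]; exact hi)]
  have h2 : i < fibW (i + 1 + 1) := by have := le_fibW (i + 1 + 1); omega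
  rw [fibSeq, tauWord_iterate]
  rcases le_total (i + 1) k with hk | hk
  · exact key _ _ hk h2
  · exact (key _ _ hk h).symm

lemma fibSeq_zero : fibSeq 0 = 0 := by decide

lemma fibSeq_one : fibSeq 1 = 1 := by decide

lemma fibSeq_add (k i : ℕ) (h : i < fibW (k + 1)) :
    fibSeq (fibW (k + 2) + i) = fibSeq i + 2 := by
  rw [fibSeq_eq (k + 2) _ (by rw [fibW_add_three]; omega), fibSeq_eq k i h, fibWord,
    List.getD_append_right _ _ _ _ (by rw [fibWord_length]; exact Nat.le_add_right _ _), fibWord_length,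
    Nat.add_sub_cancel_left]
  have h' : i < (fibWord k).length := by rw [fibWord_length]; exact h
  simp [List.getD, h']

lemma fibSeq_last (k : ℕ) : fibSeq (fibW (k + 1) - 1) = k := by
  induction k using Nat.strong_induction_on with
  | _ k ih =>
    match k with
    | 0 => exact fibSeq_zero
    | 1 => exact fibSeq_one
    | k + 2 =>
      have hp := fibW_pos (k + 1)
      have e : fibW (k + 2 + 1) - 1 = fibW (k + 2) + (fibW (k + 1) - 1) := by
        rw [fibW_add_three]; omega
      rw [e, fibSeq_add k _ (by omega), ih k (by omega)]

lemma fibSeq_lt (k i : ℕ) (h : i + 1 < fibW (k + 1)) : fibSeq i < k := by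
  induction k using Nat.strong_induction_on generalizing i with
  | _ k ih =>
    match k with
    | 0 => simp [fibW] at h
    | 1 =>
      have : i = 0 := by simp [fibW] at h; omega
      subst this; rw [fibSeq_zero]; omega
    | k + 2 =>
      rw [fibW_add_three] at h
      have hp := fibW_pos (k + 1)
      rcases lt_trichotomy (i + 1) (fibW (k + 2)) with h1 | h1 | h1
      · have := ih (k + 1) (by omega) i h1
        omega
      · have := fibSeq_last (k + 1)
        rw [show k + 1 + 1 = k + 2 from rfl, ← h1] at this
        simp at this
        omega
      · obtain ⟨q, rfl⟩ : ∃ q, i = fibW (k + 2) + q := ⟨i - fibW (k + 2), by omega⟩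
        rw [fibSeq_add k q (by omega)]
        have := ih k (by omega) q (by omega)
        omega

/-! ### Levels of cuts -/

/-- The level of the cut between two consecutive letters `a b` of `f`: it equals `k + 1` when the
cut is the one in the middle of a translate of `W_{k+1}`. -/
def pairLevel (a b : ℕ) : ℕ := if b % 2 = 1 then 1 else a + 3 - b

lemma pairLevel_shift (a b c : ℕ) : pairLevel (a + 2 * c) (b + 2 * c) = pairLevel a b := by
  unfold pairLevel
  split_ifs <;> omega

lemma pairLevel_cut (k : ℕ) :
    pairLevel (fibSeq (fibW (k + 1) - 1)) (fibSeq (fibW (k + 1))) = k + 1 := by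
  rw [fibSeq_last]
  cases k with
  | zero => simp [fibW, fibSeq_one, pairLevel]
  | succ k =>
    have := fibSeq_add k 0 (fibW_pos _)
    rw [Nat.add_zero, fibSeq_zero] at this
    rw [this]
    simp [pairLevel]

lemma pairLevel_lt (k p : ℕ) (h : p + 1 < fibW (k + 2)) (hne : p + 1 ≠ fibW (k + 1)) :
    pairLevel (fibSeq p) (fibSeq (p + 1)) < k + 1 := by
  induction k using Nat.strong_induction_on generalizing p with
  | _ k ih =>
    -- at lower levels, only the weak inequality is needed
    have ih' : ∀ m < k, ∀ q, q + 1 < fibW (m + 2) →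
        pairLevel (fibSeq q) (fibSeq (q + 1)) ≤ m + 1 := by
      intro m hm q hq
      by_cases hqm : q + 1 = fibW (m + 1)
      · have := pairLevel_cut m
        rw [← hqm] at this
        simpa using this.le
      · exact (ih m hm q hq hqm).le
    match k with
    | 0 => simp [fibW] at h hne; omega
    | k + 1 =>
      rcases lt_or_gt_of_ne hne with h1 | h1
      · have := ih' k (by omega) p h1
        omega
      · obtain ⟨q, rfl⟩ : ∃ q, p = fibW (k + 2) + q :=
          ⟨p - fibW (k + 2), by simp only [Nat.add_assoc] at h1; norm_num at h1; omega⟩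
        have e : fibW (k + 1 + 2) = fibW (k + 2) + fibW (k + 1) := rfl
        rw [e] at h
        rw [Nat.add_assoc, fibSeq_add k q (by omega), fibSeq_add k (q + 1) (by omega)]
        have h2 := pairLevel_shift (fibSeq q) (fibSeq (q + 1)) 1
        simp only [Nat.mul_one] at h2
        rw [h2]
        cases k with
        | zero => simp [fibW] at h; omega
        | succ k =>
          have := ih' k (by omega) q (by simp only [Nat.add_assoc] at h ⊢; norm_num at h ⊢; omega)
          omega

/-! ### Coding of the factors -/

/-- `(k, r)` describes a window of length `n` in `W_{k+1}` with `r` letters to the right of the cut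
at position `F_{k+1}`. -/
def Valid (n k r : ℕ) : Prop := 0 < r ∧ r < n ∧ r ≤ fibW k ∧ n ≤ fibW (k + 1) + r

instance (n k r : ℕ) : Decidable (Valid n k r) := by unfold Valid; infer_instance

/-- The factor of length `n` coded by `(k, r, c)`: the window described by `(k, r)`, with all
letters increased by `2c`. -/
def codeWord (n k r c : ℕ) : List ℕ :=
  (List.range n).map fun x => fibSeq (fibW (k + 1) + r - n + x) + 2 * c

/-- The largest letter of `codeWord n k r 0`. -/
def topLetter (k r : ℕ) : ℕ := if r = fibW k then k + 1 else k

lemma exists_code (n i : ℕ) (hn : 2 ≤ n) :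
    ∃ k r c, Valid n k r ∧
      (List.range n).map (fun x => fibSeq (i + x)) = codeWord n k r c := by
  have key : ∀ m i, i + n ≤ fibW (m + 1) → ∃ k r c, Valid n k r ∧
      ∀ x < n, fibSeq (i + x) = fibSeq (fibW (k + 1) + r - n + x) + 2 * c := by
    intro m
    induction m using Nat.strong_induction_on with
    | _ m ih =>
      intro i hi
      match m with
      | 0 => simp [fibW] at hi; omega
      | 1 =>
        simp [fibW] at hi
        obtain ⟨rfl, rfl⟩ : i = 0 ∧ n = 2 := by omega
        exact ⟨0, 1, 0, by simp [Valid, fibW], fun x _ => by simp [fibW]⟩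
      | m + 2 =>
        rw [fibW_add_three] at hi
        by_cases h1 : i + n ≤ fibW (m + 2)
        · exact ih (m + 1) (by omega) i h1
        · by_cases h2 : fibW (m + 2) ≤ i
          · obtain ⟨q, rfl⟩ : ∃ q, i = fibW (m + 2) + q := ⟨i - fibW (m + 2), by omega⟩
            obtain ⟨k, r, c, hv, hw⟩ := ih m (by omega) q (by omega)
            refine ⟨k, r, c + 1, hv, fun x hx => ?_⟩
            rw [Nat.add_assoc, fibSeq_add m (q + x) (by omega), hw x hx]
            ring
          · refine ⟨m + 1, i + n - fibW (m + 2), 0, ⟨by omega, by omega, by omega, ?_⟩, ?_⟩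
            · rw [show m + 1 + 1 = m + 2 from rfl]; omega
            · intro x hx
              rw [show m + 1 + 1 = m + 2 from rfl]
              congr 2
              omega
  obtain ⟨k, r, c, hv, hw⟩ := key (i + n) i (by have := le_fibW (i + n + 1); omega)
  refine ⟨k, r, c, hv, List.map_congr_left fun x hx => hw x (by simpa using hx)⟩

lemma exists_shift (k c : ℕ) : ∃ m, ∀ x < k, fibSeq (m + x) = fibSeq x + 2 * c := by
  induction c with
  | zero => exact ⟨0, fun x _ => by simp⟩
  | succ c ih =>
    obtain ⟨m, hm⟩ := ih
    -- `m + k + 1` is just an index large enough for the recursion to apply to `[m, m + k)`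
    refine ⟨fibW (m + k + 2) + m, fun x hx => ?_⟩
    have := le_fibW (m + k + 1)
    rw [Nat.add_assoc, fibSeq_add (m + k) (m + x) (by omega), hm x hx]
    ring

lemma codeWord_factor (n k r c : ℕ) :
    ∃ i, codeWord n k r c = (List.range n).map fun x => fibSeq (i + x) := by
  obtain ⟨m, hm⟩ := exists_shift (fibW (k + 1) + r + n) c
  refine ⟨m + (fibW (k + 1) + r - n), List.map_congr_left fun x hx => ?_⟩
  rw [List.mem_range] at hx
  rw [Nat.add_assoc, hm _ (by omega)]

lemma word_inj {n k r c k' r' c' : ℕ} (hv : Valid n k r) (hv' : Valid n k' r')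
    (h : codeWord n k r c = codeWord n k' r' c') : k = k' ∧ r = r' ∧ c = c' := by
  have hx : ∀ x < n, fibSeq (fibW (k + 1) + r - n + x) + 2 * c
      = fibSeq (fibW (k' + 1) + r' - n + x) + 2 * c' := fun x hx =>
    List.map_inj_left.1 h x (by simpa using hx)
  -- if the two cuts are at different places, each has a smaller level than the other
  have key : ∀ {k r c k' r' c' : ℕ}, Valid n k r → Valid n k' r' →
      (∀ x < n, fibSeq (fibW (k + 1) + r - n + x) + 2 * c
        = fibSeq (fibW (k' + 1) + r' - n + x) + 2 * c') → r ≠ r' → k < k' := by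
    intro k r c k' r' c' ⟨a1, a2, a3, a4⟩ ⟨b1, b2, b3, b4⟩ hx hne
    have e1 := hx (n - r - 1) (by omega)
    have e2 := hx (n - r) (by omega)
    have hl := pairLevel_cut k
    rw [← pairLevel_shift _ _ c] at hl
    rw [show fibW (k + 1) + r - n + (n - r - 1) = fibW (k + 1) - 1 by omega] at e1
    rw [show fibW (k + 1) + r - n + (n - r) = fibW (k + 1) by omega] at e2
    rw [e1, e2, pairLevel_shift, show fibW (k' + 1) + r' - n + (n - r)
      = fibW (k' + 1) + r' - n + (n - r - 1) + 1 by omega] at hl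
    have := pairLevel_lt k' (fibW (k' + 1) + r' - n + (n - r - 1))
      (by rw [fibW_add_two]; omega) (by omega)
    omega
  have hr : r = r' := by
    by_contra hne
    have h1 := key hv hv' hx hne
    have h2 := key hv' hv (fun x h => (hx x h).symm) (Ne.symm hne)
    omega
  subst hr
  obtain ⟨a1, a2, a3, a4⟩ := hv
  obtain ⟨b1, b2, b3, b4⟩ := hv'
  have e1 := hx (n - r - 1) (by omega)
  have e2 := hx (n - r) (by omega)
  rw [show fibW (k + 1) + r - n + (n - r - 1) = fibW (k + 1) - 1 by omega,
    show fibW (k' + 1) + r - n + (n - r - 1) = fibW (k' + 1) - 1 by omega] at e1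
  rw [show fibW (k + 1) + r - n + (n - r) = fibW (k + 1) by omega,
    show fibW (k' + 1) + r - n + (n - r) = fibW (k' + 1) by omega] at e2
  have hk : k = k' := by
    have h1 := pairLevel_cut k
    have h2 := pairLevel_cut k'
    rw [← pairLevel_shift _ _ c] at h1
    rw [← pairLevel_shift _ _ c', ← e1, ← e2] at h2
    omega
  subst hk
  exact ⟨rfl, rfl, by omega⟩

lemma codeWord_le {n k r : ℕ} (hv : Valid n k r) (c : ℕ) :
    ∀ x ∈ codeWord n k r c, x ≤ topLetter k r + 2 * c := by
  obtain ⟨a1, a2, a3, a4⟩ := hv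
  intro x hx
  simp only [codeWord, List.mem_map, List.mem_range] at hx
  obtain ⟨y, hy, rfl⟩ := hx
  set p := fibW (k + 1) + r - n + y with hp
  have e := fibW_add_two k
  have h0 := fibSeq_last (k + 1)
  rw [show k + 1 + 1 = k + 2 from rfl] at h0
  unfold topLetter
  by_cases hpe : p = fibW (k + 2) - 1
  · rw [hpe, h0, if_pos (by omega)]
  · have := fibSeq_lt (k + 1) p (by rw [show k + 1 + 1 = k + 2 from rfl]; omega)
    split_ifs <;> omega

lemma topLetter_mem {n k r : ℕ} (hv : Valid n k r) (c : ℕ) :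
    topLetter k r + 2 * c ∈ codeWord n k r c := by
  obtain ⟨a1, a2, a3, a4⟩ := hv
  simp only [codeWord, List.mem_map, List.mem_range]
  unfold topLetter
  split_ifs with h
  · refine ⟨n - 1, by omega, ?_⟩
    have h0 := fibSeq_last (k + 1)
    rw [show k + 1 + 1 = k + 2 from rfl, fibW_add_two] at h0
    rw [show fibW (k + 1) + r - n + (n - 1) = fibW (k + 1) + fibW k - 1 by omega, h0]
  · refine ⟨n - r - 1, by omega, ?_⟩
    rw [show fibW (k + 1) + r - n + (n - r - 1) = fibW (k + 1) - 1 by omega, fibSeq_last]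

/-! ### Factors with a given maximum -/

/-- The pairs `(k, r)` coding a factor of length `n` with maximum `N`; the translation is then
forced to be by `N - topLetter k r`. The bound on `k` is harmless, as `k ≤ topLetter k r`. -/
def codes (n N : ℕ) : Finset (ℕ × ℕ) :=
  (Finset.range (N + 1) ×ˢ Finset.range n).filter fun p =>
    Valid n p.1 p.2 ∧ topLetter p.1 p.2 ≤ N ∧ topLetter p.1 p.2 % 2 = N % 2

lemma le_topLetter (k r : ℕ) : k ≤ topLetter k r := by
  unfold topLetter; split_ifs <;> omega

lemma mem_codes {n N k r : ℕ} : (k, r) ∈ codes n N ↔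
    Valid n k r ∧ topLetter k r ≤ N ∧ topLetter k r % 2 = N % 2 := by
  simp only [codes, Finset.mem_filter, Finset.mem_product, Finset.mem_range]
  constructor
  · exact fun h => h.2
  · intro h
    have := le_topLetter k r
    exact ⟨⟨by omega, h.1.2.1⟩, h⟩

lemma factorSet_finite (a : ℕ → ℕ) (n N : ℕ) : (factorSet a n N).Finite := by
  refine (Set.finite_range
    (fun g : Fin n → Fin (N + 1) => List.ofFn fun x => (g x : ℕ))).subset ?_
  rintro u ⟨⟨i, rfl⟩, hu⟩
  have h : ∀ x : Fin n, a (i + x) ≤ N := fun x =>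
    hu _ (List.mem_map.2 ⟨x, by simp, rfl⟩)
  refine ⟨fun x => ⟨a (i + x), by have := h x; omega⟩, ?_⟩
  apply List.ext_getElem <;> simp

lemma factorSet1_eq (n N : ℕ) (hn : 2 ≤ n) (hN : 1 ≤ N) :
    factorSet1 fibSeq n N =
      (fun p : ℕ × ℕ => codeWord n p.1 p.2 ((N - topLetter p.1 p.2) / 2)) '' codes n N := by
  ext u
  constructor
  · rintro ⟨⟨⟨i, rfl⟩, hu⟩, hnot⟩
    obtain ⟨k, r, c, hv, hw⟩ := exists_code n i hn
    have h1 := topLetter_mem hv c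
    have h2 := codeWord_le hv c
    rw [← hw] at h1 h2
    have hle := hu _ h1
    have hge : N ≤ topLetter k r + 2 * c := by
      by_contra hlt
      exact hnot ⟨⟨i, rfl⟩, fun x hx => by have := h2 x hx; omega⟩
    refine ⟨(k, r), mem_codes.2 ⟨hv, by omega, by omega⟩, ?_⟩
    simp only [hw]
    congr 1
    omega
  · rintro ⟨⟨k, r⟩, hp, rfl⟩
    obtain ⟨hv, hle, hpar⟩ := mem_codes.1 hp
    have h1 := topLetter_mem hv ((N - topLetter k r) / 2)
    have h2 := codeWord_le hv ((N - topLetter k r) / 2)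
    refine ⟨⟨codeWord_factor _ _ _ _, fun x hx => ?_⟩, fun h => ?_⟩
    · have := h2 x hx
      omega
    · have := h.2 _ h1
      omega

lemma Pc1_eq (n N : ℕ) (hn : 2 ≤ n) (hN : 1 ≤ N) :
    Pc1 fibSeq n N = ((codes n N).card : ℤ) := by
  have hsub : factorSet fibSeq n (N - 1) ⊆ factorSet fibSeq n N := fun u hu =>
    ⟨hu.1, fun x hx => by have := hu.2 x hx; omega⟩
  have hd := Set.ncard_sdiff_add_ncard_of_subset hsub (factorSet_finite _ _ _)
  have hc : (factorSet1 fibSeq n N).ncard = (codes n N).card := by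
    rw [factorSet1_eq n N hn hN, Set.InjOn.ncard_image, Set.ncard_coe_finset]
    rintro ⟨k, r⟩ hp ⟨k', r'⟩ hp' h
    obtain ⟨h1, h2, -⟩ := word_inj (mem_codes.1 hp).1 (mem_codes.1 hp').1 h
    rw [h1, h2]
  rw [factorSet1] at hc
  rw [hc] at hd
  simp only [Pc1, Pc, Nat.card_coe_set_eq]
  omega

/-! ### Counting the codes -/

/-- A code of length `n > F_K` lives at level at least `K - 1`. -/
lemma Valid.le_succ {n K k r : ℕ} (hv : Valid n k r) (hK : fibW K < n) : K ≤ k + 1 := by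
  obtain ⟨a1, a2, a3, a4⟩ := hv
  by_contra h
  have := fibW_mono (show k + 2 ≤ K by omega)
  rw [fibW_add_two] at this
  omega

lemma codes_base (n K : ℕ) (h1 : fibW (K + 1) < n) (h2 : n ≤ fibW (K + 2)) :
    (codes n (K + 1)).card = fibW (K + 1) := by
  have e := fibW_add_two K
  have hp := fibW_pos K
  have hm := fibW_mono (show K ≤ K + 1 by omega)
  have : codes n (K + 1) =
      insert (K, fibW K) ({K + 1} ×ˢ Finset.Ico 1 (fibW (K + 1))) := by
    ext ⟨k, r⟩
    simp only [mem_codes, Finset.mem_insert, Finset.mem_product, Finset.mem_singleton,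
      Finset.mem_Ico, Prod.mk.injEq]
    constructor
    · rintro ⟨hv, ht, hpar⟩
      have hk := hv.le_succ h1
      obtain ⟨a1, a2, a3, a4⟩ := hv
      unfold topLetter at ht hpar
      split_ifs at ht hpar with hr
      · obtain rfl : k = K := by omega
        exact Or.inl ⟨rfl, hr⟩
      · obtain rfl : k = K + 1 := by omega
        exact Or.inr ⟨rfl, by omega, by omega⟩
    · rintro (⟨rfl, rfl⟩ | ⟨rfl, hr1, hr2⟩)
      · rw [topLetter, if_pos rfl]
        exact ⟨⟨by omega, by omega, by omega, by omega⟩, by omega, by omega⟩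
      · rw [topLetter, if_neg (by omega)]
        exact ⟨⟨by omega, by omega, by omega, by change n ≤ fibW (K + 2) + r; omega⟩,
          by omega, by omega⟩
  rw [this, Finset.card_insert_of_notMem (by simp), Finset.card_product]
  simp
  have := fibW_pos (K + 1)
  omega

lemma codes_base_succ (n K : ℕ) (h1 : fibW (K + 1) < n) (h2 : n ≤ fibW (K + 2)) :
    (codes n (K + 2)).card = fibW (K + 2) := by
  have e := fibW_add_two K
  have e' := fibW_add_three K
  have hp := fibW_pos K
  have hp' := fibW_pos (K + 1)
  have hm := fibW_mono (show K ≤ K + 1 by omega)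
  have : codes n (K + 2) =
      insert (K + 1, fibW (K + 1)) ({K} ×ˢ Finset.Ico (n - fibW (K + 1)) (fibW K) ∪
        {K + 2} ×ˢ Finset.Ico 1 n) := by
    ext ⟨k, r⟩
    simp only [mem_codes, Finset.mem_insert, Finset.mem_product, Finset.mem_singleton,
      Finset.mem_Ico, Prod.mk.injEq, Finset.mem_union]
    constructor
    · rintro ⟨hv, ht, hpar⟩
      have hk := hv.le_succ h1
      obtain ⟨a1, a2, a3, a4⟩ := hv
      unfold topLetter at ht hpar
      split_ifs at ht hpar with hr
      · obtain rfl : k = K + 1 := by omega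
        exact Or.inl ⟨rfl, hr⟩
      · obtain rfl | rfl : k = K ∨ k = K + 2 := by omega
        · exact Or.inr (Or.inl ⟨rfl, by omega, by omega⟩)
        · exact Or.inr (Or.inr ⟨rfl, by omega, by omega⟩)
    · rintro (⟨rfl, rfl⟩ | ⟨rfl, hr1, hr2⟩ | ⟨rfl, hr1, hr2⟩)
      · rw [topLetter, if_pos rfl]
        exact ⟨⟨by omega, by omega, by omega, by change n ≤ fibW (K + 2) + _; omega⟩,
          by omega, by omega⟩
      · rw [topLetter, if_neg (by omega)]
        exact ⟨⟨by omega, by omega, by omega, by omega⟩, by omega, by omega⟩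
      · rw [topLetter, if_neg (by omega)]
        exact ⟨⟨by omega, by omega, by omega, by change n ≤ fibW (K + 3) + r; omega⟩,
          by omega, by omega⟩
  rw [this, Finset.card_insert_of_notMem (by simp), Finset.card_union_of_disjoint,
    Finset.card_product, Finset.card_product]
  · simp
    omega
  · rw [Finset.disjoint_left]
    rintro ⟨k, r⟩ ha hb
    simp only [Finset.mem_product, Finset.mem_singleton] at ha hb
    omega

lemma codes_step (n K N : ℕ) (h2 : n ≤ fibW (K + 2)) (hN : K + 1 ≤ N) :
    (codes n (N + 2)).card = (codes n N).card + (n - 1) := by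
  have hm := fibW_mono (show K + 2 ≤ N + 1 by omega)
  have hm' := fibW_mono (show K + 2 ≤ N + 2 by omega)
  have e := fibW_add_three N
  have hp := fibW_pos (N + 1)
  have : codes n (N + 2) = codes n N ∪ {N + 2} ×ˢ Finset.Ico 1 n := by
    ext ⟨k, r⟩
    simp only [mem_codes, Finset.mem_product, Finset.mem_singleton,
      Finset.mem_Ico, Finset.mem_union]
    constructor
    · rintro ⟨hv, ht, hpar⟩
      by_cases hle : topLetter k r ≤ N
      · exact Or.inl ⟨hv, hle, by omega⟩
      · right
        have heq : topLetter k r = N + 2 := by omega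
        obtain ⟨a1, a2, a3, a4⟩ := hv
        unfold topLetter at heq
        split_ifs at heq with hr
        · -- here `r = F_{N+1} ≥ n`, which is excluded
          obtain rfl : k = N + 1 := by omega
          omega
        · exact ⟨heq, by omega, by omega⟩
    · rintro (⟨hv, ht, hpar⟩ | ⟨rfl, hr1, hr2⟩)
      · exact ⟨hv, by omega, by omega⟩
      · rw [topLetter, if_neg (by omega)]
        exact ⟨⟨by omega, by omega, by omega, by change n ≤ fibW (N + 3) + r; omega⟩,
          by omega, by omega⟩
  rw [this, Finset.card_union_of_disjoint, Finset.card_product]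
  · simp
  · rw [Finset.disjoint_left]
    rintro ⟨k, r⟩ ha hb
    have ha := (mem_codes.1 ha).2.1
    simp only [Finset.mem_product, Finset.mem_singleton] at hb
    have := le_topLetter k r
    omega

lemma codes_iter (n K N s : ℕ) (h2 : n ≤ fibW (K + 2))
    (hN : K + 1 ≤ N) : (codes n (N + 2 * s)).card = (codes n N).card + s * (n - 1) := by
  induction s with
  | zero => simp
  | succ s ih =>
    rw [show N + 2 * (s + 1) = N + 2 * s + 2 by ring, codes_step n K _ h2 (by omega), ih]
    ring


theorem stmt4 (n : ℕ) (hn : 2 ≤ n) (N : ℕ) :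
    (N = phi n → Pc1 fibSeq n N = (fibW N : ℤ)) ∧
    (phi n + 1 ≤ N → Odd (N + phi n) →
      (Pc1 fibSeq n N : ℚ) =
        (fibW (phi n + 1) : ℚ) + ((n : ℚ) - 1) * ((N : ℚ) - (phi n : ℚ) - 1) / 2) ∧
    (phi n + 1 ≤ N → Even (N + phi n) →
      (Pc1 fibSeq n N : ℚ) =
        (fibW (phi n) : ℚ) + ((n : ℚ) - 1) * ((N : ℚ) - (phi n : ℚ)) / 2) := by
  obtain ⟨h1, h2, h3⟩ := phi_spec n hn
  obtain ⟨K, hK⟩ : ∃ K, phi n = K + 1 := ⟨phi n - 1, by omega⟩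
  rw [hK] at h1 h2 ⊢
  have hn1 : ((n - 1 : ℕ) : ℚ) = (n : ℚ) - 1 := by
    rw [Nat.cast_sub (by omega)]; simp
  refine ⟨?_, ?_, ?_⟩
  · rintro rfl
    rw [Pc1_eq n _ hn (by omega), codes_base n K h1 h2]
  · intro hle hodd
    obtain ⟨s, rfl⟩ : ∃ s, N = K + 2 + 2 * s := by
      obtain ⟨t, ht⟩ := hodd
      exact ⟨t - K - 1, by omega⟩
    rw [Pc1_eq n _ hn (by omega), codes_iter n K _ s h2 (by omega), codes_base_succ n K h1 h2]
    push_cast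
    rw [hn1]
    ring
  · intro hle heven
    obtain ⟨s, rfl⟩ : ∃ s, N = K + 1 + 2 * s := by
      obtain ⟨t, ht⟩ := heven
      exact ⟨t - K - 1, by omega⟩
    rw [Pc1_eq n _ hn (by omega), codes_iter n K _ s h2 (by omega), codes_base n K h1 h2]
    push_cast
    rw [hn1]
    ring
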